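/- arXiv:1907.04585 — 2 statements merged into one kernel-verified Lean document; each statement's English description precedes it below -/
import Mathlib

section
/- Let t ≥ 2 be an integer and let G be a connected P_t-free graph on n ≥ 16 vertices such that |N[v]| ≤ (1/(4(t−1))) · √n for every vertex v of G. Then there exists a set X ⊆ V(G) such that every connected component C of G − X satisfies |V(C)| ≤ n − √n, and moreover |X| ≤ n^{−1/2} · (n − |V(C)|) for every connected component C of G − X. -/
noncomputable section

namespace Paper

/-- The closed neighborhood `N[X]` of a set `X` of vertices. -/
def closedNbhd {V : Type} (G : SimpleGraph V) (X : Set V) : Set V :=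
  {v | v ∈ X ∨ ∃ x ∈ X, G.Adj x v}

/-- `p : Fin m → V` is an induced path in `G` (on `m` vertices). -/
def InducedPathFun {V : Type} (G : SimpleGraph V) {m : ℕ} (p : Fin m → V) : Prop :=
  Function.Injective p ∧
    ∀ i j : Fin m, G.Adj (p i) (p j) ↔ ((i : ℕ) + 1 = (j : ℕ) ∨ (j : ℕ) + 1 = (i : ℕ))

/-- `G` is `P_t`-free: it contains no induced path on `t` vertices. -/
def PtFree {V : Type} (G : SimpleGraph V) (t : ℕ) : Prop :=
  ∀ p : Fin t → V, ¬ InducedPathFun G p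

/-- `C` is a connected component of `G - X`. -/
def IsCompOfDel {V : Type} (G : SimpleGraph V) (X : Set V) (C : Set V) : Prop :=
  ∃ v : ↥(Xᶜ), C = Subtype.val '' {u : ↥(Xᶜ) | (G.induce Xᶜ).Reachable u v}

/-!
Gyárfás' path argument. Suppose that for every set `S` of fewer than `t` vertices, `G - N[S]` has a
component with more than half of the vertices. Any two such components meet, so those obtained
while growing `S` along a path are nested. If `C` is the large component left by deleting the
closed neighborhoods of all vertices of an induced path but its last vertex `v`, and `C'` the one
left after deleting `N[v]` as well, then connectivity of `C` provides a vertex of `C ∩ N[v]` with a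
neighbor in `C'`, and appending it to the path keeps the path induced. This produces an induced
path on `t` vertices. Hence in a `P_t`-free graph some `N[S]` with `|S| ≤ t - 1` is a balanced
separator, and the degree bound gives `|N[S]| ≤ √n / 4`.
-/

section

variable {V : Type} {G : SimpleGraph V}

lemma mem_closedNbhd_singleton_self (v : V) : v ∈ closedNbhd G {v} :=
  Or.inl rfl

lemma one_le_ncard_closedNbhd_singleton [Finite V] (v : V) : 1 ≤ (closedNbhd G {v}).ncard :=
  (Set.ncard_pos (Set.toFinite _)).mpr ⟨v, mem_closedNbhd_singleton_self v⟩

lemma closedNbhd_mono {S T : Set V} (hST : S ⊆ T) : closedNbhd G S ⊆ closedNbhd G T :=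
  fun _ => Or.imp (@hST _) fun ⟨x, hx, hadj⟩ => ⟨x, hST hx, hadj⟩

lemma closedNbhd_eq_biUnion (S : Set V) : closedNbhd G S = ⋃ v ∈ S, closedNbhd G {v} := by
  ext u
  simp only [closedNbhd, Set.mem_iUnion, Set.mem_ofPred_eq, Set.mem_singleton_iff,
    exists_eq_left, exists_prop, and_or_left, exists_or, exists_eq_right']

lemma ncard_closedNbhd_le (S : Finset V) {d : ℝ} (hd : ∀ v ∈ S, (closedNbhd G {v}).ncard ≤ d) :
    (closedNbhd G (S : Set V)).ncard ≤ S.card * d :=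
  calc ((closedNbhd G (S : Set V)).ncard : ℝ)
      ≤ ∑ v ∈ S, ((closedNbhd G {v}).ncard : ℝ) := by
        rw [closedNbhd_eq_biUnion]
        exact_mod_cast S.set_ncard_biUnion_le fun v => closedNbhd G {v}
    _ ≤ S.card * d := by
        simpa only [nsmul_eq_mul] using S.sum_le_card_nsmul _ d hd

namespace IsCompOfDel

variable {X Y C C' : Set V}

lemma nonempty (hC : IsCompOfDel G X C) : C.Nonempty := by
  obtain ⟨v, rfl⟩ := hC
  exact ⟨v, v, .rfl, rfl⟩

lemma notMem_of_mem (hC : IsCompOfDel G X C) {x : V} (hx : x ∈ C) : x ∉ X := by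
  obtain ⟨v, rfl⟩ := hC
  obtain ⟨u, -, rfl⟩ := hx
  exact u.2

lemma mem_of_adj (hC : IsCompOfDel G X C) {x y : V} (hx : x ∈ C) (hxy : G.Adj x y)
    (hy : y ∉ X) : y ∈ C := by
  obtain ⟨v, rfl⟩ := hC
  obtain ⟨u, hu, rfl⟩ := hx
  have hyu : (G.induce Xᶜ).Adj ⟨y, hy⟩ u := hxy.symm
  exact ⟨⟨y, hy⟩, hyu.reachable.trans hu, rfl⟩

lemma exists_adj_of_ssubset (hC : IsCompOfDel G X C) {D : Set V} (hDC : D ⊂ C)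
    (hD : D.Nonempty) : ∃ x ∈ D, ∃ u ∈ C \ D, G.Adj x u := by
  have ⟨x, hx⟩ := hD
  obtain ⟨w, hwC, hwD⟩ := Set.exists_of_ssubset hDC
  have hxC := hDC.subset hx
  have ⟨v, hv⟩ := hC
  rw [hv] at hxC hwC
  obtain ⟨x, hxv, rfl⟩ := hxC
  obtain ⟨w, hwv, rfl⟩ := hwC
  obtain ⟨walk⟩ : (G.induce Xᶜ).Reachable x w := hxv.trans (SimpleGraph.Reachable.symm hwv)
  obtain ⟨e, -, hfst, hsnd⟩ := walk.exists_boundary_dart (Subtype.val ⁻¹' D) hx hwD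
  have hadj : G.Adj e.fst e.snd := e.adj
  exact ⟨e.fst, hfst, e.snd, ⟨hC.mem_of_adj (hDC.subset hfst) hadj e.snd.2, hsnd⟩, hadj⟩

lemma subset_of_inter_nonempty (hC : IsCompOfDel G X C) (hC' : IsCompOfDel G Y C')
    (hXY : X ⊆ Y) (hmeet : (C' ∩ C).Nonempty) : C' ⊆ C := by
  by_contra hsub
  have hss : C' ∩ C ⊂ C' :=
    Set.inter_subset_left.ssubset_of_ne fun h => hsub (Set.inter_eq_left.mp h)
  obtain ⟨x, hx, u, hu, hxu⟩ := hC'.exists_adj_of_ssubset hss hmeet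
  have huX : u ∉ X := fun h => hC'.notMem_of_mem hu.1 (hXY h)
  exact hu.2 ⟨hu.1, hC.mem_of_adj hx.2 hxu huX⟩

lemma exists_adj_mem_inter (hC : IsCompOfDel G X C) (hC' : IsCompOfDel G Y C')
    (hXY : X ⊆ Y) (hmeet : (C' ∩ C).Nonempty) (hCY : (C ∩ Y).Nonempty) :
    ∃ x ∈ C', ∃ u ∈ C ∩ Y, G.Adj x u := by
  obtain ⟨w, hwC, hwY⟩ := hCY
  have hss : C' ⊂ C := (hC.subset_of_inter_nonempty hC' hXY hmeet).ssubset_of_mem_notMem hwC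
    fun hwC' => hC'.notMem_of_mem hwC' hwY
  obtain ⟨x, hx, u, hu, hxu⟩ := hC.exists_adj_of_ssubset hss hC'.nonempty
  have huY : u ∈ Y := by
    by_contra huY
    exact hu.2 (hC'.mem_of_adj hx hxu huY)
  exact ⟨x, hx, u, ⟨hu.1, huY⟩, hxu⟩

end IsCompOfDel

lemma inducedPathFun_const (v : V) : InducedPathFun G fun _ : Fin 1 => v :=
  ⟨Function.injective_of_subsingleton _, fun i j => by simp⟩

lemma InducedPathFun.snoc {k : ℕ} {p : Fin (k + 1) → V} (hp : InducedPathFun G p) {u : V}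
    (hu : u ∉ Set.range p) (hadj : ∀ i, G.Adj (p i) u ↔ i = Fin.last k) :
    InducedPathFun G (Fin.snoc p u : Fin (k + 1 + 1) → V) := by
  refine ⟨Fin.snoc_injective_of_injective hp.1 hu, fun i j => ?_⟩
  induction i using Fin.lastCases <;> induction j using Fin.lastCases
  case last.last => simp
  case last.cast j =>
    rw [Fin.snoc_last, Fin.snoc_castSucc, G.adj_comm, hadj, Fin.ext_iff]
    simp only [Fin.val_last, Fin.val_castSucc]
    omega
  case cast.last i =>
    rw [Fin.snoc_last, Fin.snoc_castSucc, hadj, Fin.ext_iff]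
    simp only [Fin.val_last, Fin.val_castSucc]
    omega
  case cast.cast i j => simpa only [Fin.snoc_castSucc, Fin.val_castSucc] using hp.2 i j

/-- A Gyárfás path: an induced path `p` together with a component `C` of the graph left by deleting
the closed neighborhoods of all vertices of `p` but the last, such that `C` meets the closed
neighborhood of the last vertex. Such a path can be prolonged into `C`. -/
structure IsGyarfasPath (G : SimpleGraph V) {k : ℕ} (p : Fin (k + 1) → V) (C : Set V) : Prop where
  inducedPath : InducedPathFun G p
  isCompOfDel : IsCompOfDel G (closedNbhd G (Set.range (Fin.init p))) C
  inter_nonempty : (C ∩ closedNbhd G {p (Fin.last k)}).Nonempty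

namespace IsGyarfasPath

lemma exists_const {C : Set V} (hC : IsCompOfDel G (closedNbhd G ∅) C) :
    ∃ v, IsGyarfasPath G (fun _ : Fin 1 => v) C := by
  obtain ⟨v, hv⟩ := hC.nonempty
  exact ⟨v, inducedPathFun_const v, by rwa [Set.range_eq_empty],
    v, hv, mem_closedNbhd_singleton_self v⟩

lemma exists_snoc {k : ℕ} {p : Fin (k + 1) → V} {C C' : Set V} (hp : IsGyarfasPath G p C)
    (hC' : IsCompOfDel G (closedNbhd G (Set.range p)) C') (hmeet : (C' ∩ C).Nonempty) :
    ∃ u, IsGyarfasPath G (Fin.snoc p u : Fin (k + 1 + 1) → V) C' := by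
  have hinit : closedNbhd G (Set.range (Fin.init p)) ⊆ closedNbhd G (Set.range p) :=
    closedNbhd_mono (Set.range_comp_subset_range Fin.castSucc p)
  have hlast : closedNbhd G {p (Fin.last k)} ⊆ closedNbhd G (Set.range p) :=
    closedNbhd_mono (Set.singleton_subset_iff.mpr ⟨_, rfl⟩)
  obtain ⟨x, hx, u, ⟨huC, huN⟩, hxu⟩ := hp.isCompOfDel.exists_adj_mem_inter hC' hinit hmeet
    (hp.inter_nonempty.mono (Set.inter_subset_inter_right C hlast))
  have hu : u ∉ Set.range p := fun hu => hC'.notMem_of_mem hx (Or.inr ⟨u, hu, hxu.symm⟩)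
  have hnadj (i : Fin k) : ¬ G.Adj (p i.castSucc) u := fun hadj =>
    hp.isCompOfDel.notMem_of_mem huC (Or.inr ⟨_, ⟨i, rfl⟩, hadj⟩)
  obtain ⟨_, ⟨i, rfl⟩, hiu⟩ := huN.resolve_left hu
  have hadj_last : G.Adj (p (Fin.last k)) u := by
    induction i using Fin.lastCases with
    | last => exact hiu
    | cast i => exact absurd hiu (hnadj i)
  have hadj (i : Fin (k + 1)) : G.Adj (p i) u ↔ i = Fin.last k := by
    induction i using Fin.lastCases with
    | last => simpa using hadj_last
    | cast i => simpa [(Fin.castSucc_lt_last i).ne] using hnadj i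
  refine ⟨u, hp.inducedPath.snoc hu hadj, ?_, x, hx, ?_⟩
  · rwa [Fin.init_snoc]
  · rw [Fin.snoc_last]
    exact Or.inr ⟨u, rfl, hxu.symm⟩

end IsGyarfasPath

lemma exists_isGyarfasPath_of_forall_exists_large_comp [Finite V] {t : ℕ}
    (hlarge : ∀ S : Finset V, S.card < t →
      ∃ C, IsCompOfDel G (closedNbhd G S) C ∧ Nat.card V < 2 * C.ncard)
    (k : ℕ) (hk : k < t) :
    ∃ (p : Fin (k + 1) → V) (C : Set V), IsGyarfasPath G p C ∧ Nat.card V < 2 * C.ncard := by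
  classical
  induction k with
  | zero =>
    obtain ⟨C, hC, hcard⟩ := hlarge ∅ hk
    rw [Finset.coe_empty] at hC
    obtain ⟨v, hv⟩ := IsGyarfasPath.exists_const hC
    exact ⟨_, C, hv, hcard⟩
  | succ k ih =>
    obtain ⟨p, C, hp, hcard⟩ := ih (by omega)
    have himage : (Finset.univ.image p).card < t :=
      (Finset.card_image_le.trans_eq (Finset.card_fin _)).trans_lt hk
    obtain ⟨C', hC', hcard'⟩ := hlarge _ himage
    rw [Finset.coe_image, Finset.coe_univ, Set.image_univ] at hC'
    have hmeet : (C' ∩ C).Nonempty := Set.nonempty_inter_of_lt_ncard_add_ncard (by omega)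
    obtain ⟨u, hu⟩ := hp.exists_snoc hC' hmeet
    exact ⟨_, C', hu, hcard'⟩

theorem PtFree.exists_closedNbhd_balanced_separator [Finite V] {t : ℕ} (hfree : PtFree G t) :
    ∃ S : Finset V, S.card < t ∧
      ∀ C, IsCompOfDel G (closedNbhd G S) C → 2 * C.ncard ≤ Nat.card V := by
  by_contra! hlarge
  cases t with
  | zero => exact hfree Fin.elim0 ⟨Function.injective_of_subsingleton _, fun i => i.elim0⟩
  | succ k =>
    obtain ⟨p, _, hp, -⟩ :=
      exists_isGyarfasPath_of_forall_exists_large_comp hlarge k k.lt_succ_self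
    exact hfree p hp.inducedPath

theorem PtFree.exists_balanced_separator_ncard_le [Finite V] {t : ℕ} (hfree : PtFree G t) {d : ℝ}
    (hd : 0 ≤ d) (hdeg : ∀ v : V, (closedNbhd G {v}).ncard ≤ d) :
    ∃ X : Set V, X.ncard ≤ (t - 1) * d ∧
      ∀ C, IsCompOfDel G X C → 2 * C.ncard ≤ Nat.card V := by
  obtain ⟨S, hS, hbalanced⟩ := hfree.exists_closedNbhd_balanced_separator
  have hS' : (S.card : ℝ) ≤ t - 1 := le_sub_iff_add_le.mpr (by exact_mod_cast hS)
  exact ⟨closedNbhd G S, (ncard_closedNbhd_le S fun v _ => hdeg v).trans (by gcongr), hbalanced⟩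

lemma le_sub_sqrt_of_two_mul_le {n c : ℝ} (hn : 4 ≤ n) (hc : 2 * c ≤ n) : c ≤ n - √n := by
  have hsq : √n * √n = n := Real.mul_self_sqrt (by linarith)
  have htwo : 2 ≤ √n := Real.le_sqrt_of_sq_le (by linarith)
  nlinarith

lemma sqrt_div_two_le_rpow_neg_half_mul_sub {n c : ℝ} (hn : 0 < n) (hc : 2 * c ≤ n) :
    √n / 2 ≤ n ^ (-(1 / 2 : ℝ)) * (n - c) :=
  calc √n / 2 = n ^ (-(1 / 2 : ℝ)) * (n / 2) := by
        rw [Real.rpow_neg hn.le, ← Real.sqrt_eq_rpow, inv_mul_eq_div, div_right_comm,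
          Real.div_sqrt]
    _ ≤ n ^ (-(1 / 2 : ℝ)) * (n - c) := by
        gcongr
        linarith

lemma sixteen_le_card_of_ncard_closedNbhd_le [Fintype V] {t : ℕ} (ht : 2 ≤ t) (v : V)
    (hdeg : ((closedNbhd G {v}).ncard : ℝ) ≤ (1 / (4 * ((t : ℝ) - 1))) * √(Fintype.card V)) :
    (16 : ℝ) ≤ Fintype.card V := by
  have ht' : (1 : ℝ) ≤ t - 1 := le_sub_iff_add_le.mpr (by exact_mod_cast ht)
  have hone : (1 : ℝ) ≤ (closedNbhd G {v}).ncard := by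
    exact_mod_cast one_le_ncard_closedNbhd_singleton v
  have hsqrt : 4 ≤ √(Fintype.card V) := by
    rw [one_div_mul_eq_div, le_div_iff₀ (by linarith)] at hdeg
    nlinarith
  linarith [(Real.le_sqrt' (by norm_num)).mp hsqrt]

end

theorem stmt3_general {V : Type} [Fintype V] (t : ℕ) (ht : 2 ≤ t) (G : SimpleGraph V)
    (hfree : PtFree G t)
    (hdeg : ∀ v : V, ((closedNbhd G {v}).ncard : ℝ) ≤
      (1 / (4 * ((t : ℝ) - 1))) * Real.sqrt (Fintype.card V)) :
    ∃ X : Set V, ∀ C : Set V, IsCompOfDel G X C →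
      (C.ncard : ℝ) ≤ (Fintype.card V : ℝ) - Real.sqrt (Fintype.card V) ∧
      (X.ncard : ℝ) ≤ (Fintype.card V : ℝ) ^ (-(1 / 2 : ℝ)) *
        ((Fintype.card V : ℝ) - (C.ncard : ℝ)) := by
  have ht' : (0 : ℝ) < t - 1 := sub_pos.mpr (by exact_mod_cast ht)
  obtain ⟨X, hX, hbalanced⟩ := hfree.exists_balanced_separator_ncard_le (by positivity) hdeg
  refine ⟨X, fun C hC => ?_⟩
  have hhalf : 2 * (C.ncard : ℝ) ≤ Fintype.card V := by
    exact_mod_cast Nat.card_eq_fintype_card (α := V) ▸ hbalanced C hC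
  have hX' : (X.ncard : ℝ) ≤ √(Fintype.card V) / 2 :=
    calc (X.ncard : ℝ) ≤ (t - 1) * (1 / (4 * ((t : ℝ) - 1)) * √(Fintype.card V)) := hX
      _ = √(Fintype.card V) / 4 := by field_simp
      _ ≤ √(Fintype.card V) / 2 := by gcongr; norm_num
  obtain ⟨v, -⟩ := hC.nonempty
  have hn := sixteen_le_card_of_ncard_closedNbhd_le ht v (hdeg v)
  exact ⟨le_sub_sqrt_of_two_mul_le (by linarith) hhalf,
    hX'.trans (sqrt_div_two_le_rpow_neg_half_mul_sub (by linarith) hhalf)⟩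

/-- if `G` is a connected `P_t`-free graph on `n ≥ 16` vertices with
`|N[v]| ≤ (1/(4(t-1)))·√n` for every vertex `v`, then there is a set `X` of vertices
such that every connected component `C` of `G - X` satisfies `|C| ≤ n - √n` and
`|X| ≤ n^{-1/2}·(n - |C|)`. -/
theorem stmt3 {V : Type} [Fintype V] (t : ℕ) (ht : 2 ≤ t) (G : SimpleGraph V)
    (hconn : G.Connected) (hfree : PtFree G t) (hn : 16 ≤ Fintype.card V)
    (hdeg : ∀ v : V, ((closedNbhd G {v}).ncard : ℝ) ≤
      (1 / (4 * ((t : ℝ) - 1))) * Real.sqrt (Fintype.card V)) :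
    ∃ X : Set V, ∀ C : Set V, IsCompOfDel G X C →
      (C.ncard : ℝ) ≤ (Fintype.card V : ℝ) - Real.sqrt (Fintype.card V) ∧
      (X.ncard : ℝ) ≤ (Fintype.card V : ℝ) ^ (-(1 / 2 : ℝ)) *
        ((Fintype.card V : ℝ) - (C.ncard : ℝ)) := by
  exact stmt3_general t ht G hfree hdeg

end Paper
end
end

section
/- Let t ≥ 4 be an integer and let G be a connected C_{≥t}-free graph with a weight function w : V(G) → ℕ. Then there exists an induced path Q in G on fewer than t vertices such that every connected component C of G − N[V(Q)] satisfies w(C) ≤ (3/4) · w(G). -/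
noncomputable section

namespace Paper

/-- The total weight `w(X)` of a set of vertices. -/
def wsum {V : Type} (w : V → ℕ) (X : Set V) : ℕ := ∑ᶠ x ∈ X, w x

/-- `p : Fin k → V` is an induced cycle in `G` (on `k` vertices): injective, with two of
its vertices adjacent exactly when consecutive cyclically. -/
def IsInducedCycle {V : Type} (G : SimpleGraph V) {k : ℕ} (p : Fin k → V) : Prop :=
  Function.Injective p ∧
    ∀ i j : Fin k, G.Adj (p i) (p j) ↔
      (((i : ℕ) + 1) % k = (j : ℕ) ∨ ((j : ℕ) + 1) % k = (i : ℕ))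

/-- `G` is `C_{≥t}`-free: it contains no induced cycle on at least `t` vertices. -/
def CgeFree {V : Type} (G : SimpleGraph V) (t : ℕ) : Prop :=
  ∀ k, t ≤ k → ∀ p : Fin k → V, ¬ IsInducedCycle G p

/-!
Suppose that every short induced path `Q` leaves a component of `G - N[V(Q)]` with more than half
of the weight. Gyárfás' path argument then grows an induced path forever: having built
`p 0, …, p k` (newest vertex first) and a heavy connected set `B` touched by `N[p 0]` but by no
other `N[p i]`, take a heavy component `C` left by the newest `n = t - 3` vertices. Two heavy sets
meet, so `B` contains a neighbour `x` of `p 0` that is attached to `C`. If `C` is anticomplete to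
the older vertices too, `x` and `C` continue the construction. Otherwise a shortest path from `x`
through `C` to a neighbour of an older `p i` closes an induced cycle containing `p 0, …, p i`, `x`
and a vertex of `C`, hence of length at least `n + 3 = t`.
-/

section General

variable {V : Type*} {G : SimpleGraph V}

/-- The vertices `p 0, …, p (m - 1)` form an induced path in this order; the values of `p` from
`m` on are irrelevant. Indexing by `ℕ` instead of `Fin m` keeps initial segments free of casts. -/
def IsInducedPathSeq (G : SimpleGraph V) (p : ℕ → V) (m : ℕ) : Prop :=
  ∀ i j, i < j → j < m → p i ≠ p j ∧ (G.Adj (p i) (p j) ↔ j = i + 1)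

/-- The sequence `x, p 0, p 1, …`. -/
def seqCons (x : V) (p : ℕ → V) : ℕ → V
  | 0 => x
  | i + 1 => p i

namespace IsInducedPathSeq

variable {p : ℕ → V} {m : ℕ}

lemma mono (hp : IsInducedPathSeq G p m) {k : ℕ} (hkm : k ≤ m) : IsInducedPathSeq G p k :=
  fun i j hij hj ↦ hp i j hij (hj.trans_le hkm)

lemma adj_succ (hp : IsInducedPathSeq G p m) {i : ℕ} (hi : i + 1 < m) :
    G.Adj (p i) (p (i + 1)) :=
  (hp i (i + 1) i.lt_succ_self hi).2.2 rfl

lemma injective (hp : IsInducedPathSeq G p m) : Function.Injective fun i : Fin m ↦ p i :=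
  .of_lt_imp_ne fun i j hij ↦ (hp i j hij j.isLt).1

lemma eq_iff (hp : IsInducedPathSeq G p m) {i j : ℕ} (hi : i < m) (hj : j < m) :
    p i = p j ↔ i = j :=
  (hp.injective.eq_iff (a := ⟨i, hi⟩) (b := ⟨j, hj⟩)).trans Fin.mk_eq_mk

lemma le_card [Finite V] (hp : IsInducedPathSeq G p m) : m ≤ Nat.card V := by
  simpa using Nat.card_le_card_of_injective _ hp.injective

lemma cons (hp : IsInducedPathSeq G p m) {x : V}
    (hx : ∀ i < m, p i ≠ x ∧ (G.Adj (p i) x ↔ i = 0)) :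
    IsInducedPathSeq G (seqCons x p) (m + 1) := by
  rintro (_ | i) (_ | j) hij hj
  · omega
  · obtain ⟨hne, hadj⟩ := hx j (by omega)
    exact ⟨hne.symm, (G.adj_comm _ _).trans (hadj.trans (by omega))⟩
  · omega
  · obtain ⟨hne, hadj⟩ := hp i j (by omega) (by omega)
    exact ⟨hne, hadj.trans (by omega)⟩

lemma of_induce {D : Set V} {c : ℕ → D} (hc : IsInducedPathSeq (G.induce D) c m) :
    IsInducedPathSeq G (fun i ↦ (c i : V)) m :=
  fun i j hij hj ↦ ⟨Subtype.coe_ne_coe.2 (hc i j hij hj).1, (hc i j hij hj).2⟩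

end IsInducedPathSeq

lemma dist_getVert_getVert {u v : V} {q : G.Walk u v} (hq : q.length = G.dist u v) {i j : ℕ}
    (hij : i ≤ j) (hj : j ≤ q.length) : G.dist (q.getVert i) (q.getVert j) = j - i := by
  have hsub : ((q.drop i).take (j - i)).IsSubwalk q :=
    ((q.drop i).isSubwalk_take _).trans (q.isSubwalk_drop i)
  have hend : (q.drop i).getVert (j - i) = q.getVert j := by
    rw [SimpleGraph.Walk.drop_getVert, Nat.add_sub_cancel' hij]
  rw [← hend, ← SimpleGraph.length_eq_dist_of_subwalk hq hsub, SimpleGraph.Walk.take_length,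
    SimpleGraph.Walk.drop_length]
  omega

lemma isInducedPathSeq_getVert {u v : V} {q : G.Walk u v} (hq : q.length = G.dist u v) :
    IsInducedPathSeq G q.getVert (q.length + 1) := by
  intro i j hij hj
  have hdist := dist_getVert_getVert hq hij.le (Nat.lt_succ_iff.1 hj)
  constructor
  · intro heq
    rw [heq, SimpleGraph.dist_self] at hdist
    omega
  · rw [← SimpleGraph.dist_eq_one_iff_adj, hdist]
    omega

lemma exists_isInducedPathSeq_to_set {D T : Set V} (hD : (G.induce D).Connected) {x : V}
    (hx : x ∈ D) (hT : (D ∩ T).Nonempty) :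
    ∃ (l : ℕ) (c : ℕ → V), IsInducedPathSeq G c (l + 1) ∧ (∀ i, c i ∈ D) ∧ c 0 = x ∧
      c l ∈ T ∧ ∀ i < l, c i ∉ T := by
  obtain ⟨v, hvD, hvT⟩ := hT
  obtain ⟨u, huT, hmin⟩ := exists_minimalFor_of_wellFoundedLT (fun u : D ↦ (u : V) ∈ T)
    ((G.induce D).dist ⟨x, hx⟩) ⟨⟨v, hvD⟩, hvT⟩
  obtain ⟨q, hq⟩ := hD.exists_walk_length_eq_dist ⟨x, hx⟩ u
  refine ⟨q.length, fun i ↦ q.getVert i, (isInducedPathSeq_getVert hq).of_induce,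
    fun i ↦ (q.getVert i).2, by simp, by simpa using huT, fun i hi hiT ↦ ?_⟩
  have hdist := dist_getVert_getVert hq i.zero_le hi.le
  rw [q.getVert_zero] at hdist
  have := hmin hiT (by omega)
  omega

lemma exists_adj_of_preconnected_induce {B C : Set V} (hB : (G.induce B).Preconnected)
    (hBC : (B ∩ C).Nonempty) (hBC' : (B \ C).Nonempty) :
    ∃ u ∈ B ∩ C, ∃ v ∈ B \ C, G.Adj u v := by
  obtain ⟨z, hzB, hzC⟩ := hBC
  obtain ⟨b, hbB, hbC⟩ := hBC'
  obtain ⟨walk⟩ := hB ⟨z, hzB⟩ ⟨b, hbB⟩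
  obtain ⟨d, -, hfst, hsnd⟩ := walk.exists_boundary_dart {u : B | (u : V) ∈ C} hzC hbC
  exact ⟨d.fst, ⟨d.fst.2, hfst⟩, d.snd, ⟨d.snd.2, hsnd⟩, d.adj⟩

end General

section Separator

variable {V : Type} {G : SimpleGraph V}

lemma mem_closedNbhd_singleton {u v : V} : u ∈ closedNbhd G {v} ↔ u = v ∨ G.Adj v u := by
  simp [closedNbhd]

lemma notMem_closedNbhd_singleton {u v : V} :
    u ∉ closedNbhd G {v} ↔ v ≠ u ∧ ¬G.Adj v u := by
  rw [mem_closedNbhd_singleton, not_or, ne_comm]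

lemma mem_closedNbhd_range {ι : Type*} {f : ι → V} {u : V} :
    u ∈ closedNbhd G (Set.range f) ↔ ∃ i, u ∈ closedNbhd G {f i} := by
  simp [closedNbhd, exists_or, eq_comm]

lemma IsInducedPathSeq.inducedPathFun {p : ℕ → V} {m : ℕ} (hp : IsInducedPathSeq G p m) :
    InducedPathFun G fun i : Fin m ↦ p i := by
  refine ⟨hp.injective, fun i j ↦ ?_⟩
  rcases lt_trichotomy i j with hij | rfl | hij
  · rw [(hp i j hij j.isLt).2]
    omega
  · simp
  · rw [G.adj_comm, (hp j i hij i.isLt).2]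
    omega

lemma isInducedCycle_of_forall_lt {q : ℕ → V} {k : ℕ} (hk : 2 ≤ k)
    (hq : ∀ i j, i < j → j < k →
      q i ≠ q j ∧ (G.Adj (q i) (q j) ↔ j = i + 1 ∨ i = 0 ∧ j + 1 = k)) :
    IsInducedCycle G fun i : Fin k ↦ q i := by
  have succ_mod_eq (i j : Fin k) :
      ((i : ℕ) + 1) % k = j ↔ (j : ℕ) = i + 1 ∨ (j : ℕ) = 0 ∧ (i : ℕ) + 1 = k := by
    rcases (Nat.succ_le_of_lt i.isLt).lt_or_eq with hi | hi
    · rw [Nat.mod_eq_of_lt hi]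
      omega
    · rw [← Nat.succ_eq_add_one, hi, Nat.mod_self]
      omega
  refine ⟨.of_lt_imp_ne fun i j hij ↦ (hq i j hij j.isLt).1, fun i j ↦ ?_⟩
  rw [succ_mod_eq, succ_mod_eq]
  rcases lt_trichotomy i j with hij | rfl | hij
  · rw [(hq i j hij j.isLt).2]
    omega
  · simp only [SimpleGraph.irrefl, false_iff]
    omega
  · rw [G.adj_comm, (hq j i hij i.isLt).2]
    omega

lemma IsInducedPathSeq.exists_isInducedCycle_of_glue {p c : ℕ → V} {a l : ℕ}
    (hp : IsInducedPathSeq G p (a + 1)) (hc : IsInducedPathSeq G c (l + 1))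
    (hne : ∀ i ≤ a, ∀ j ≤ l, p i ≠ c j)
    (hadj : ∀ i ≤ a, ∀ j ≤ l, G.Adj (p i) (c j) ↔ i = 0 ∧ j = 0 ∨ i = a ∧ j = l) :
    ∃ q : Fin (a + l + 2) → V, IsInducedCycle G q := by
  let q : ℕ → V := fun i ↦ if i ≤ a then p (a - i) else c (i - (a + 1))
  refine ⟨fun i ↦ q i, isInducedCycle_of_forall_lt (by omega) fun i j hij hj ↦ ?_⟩
  rcases le_or_gt j a with hja | haj
  · obtain ⟨hne', hadj'⟩ := hp (a - j) (a - i) (by omega) (by omega)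
    simp only [q, hja, hij.le.trans hja, if_true]
    exact ⟨hne'.symm, (G.adj_comm _ _).trans (hadj'.trans (by omega))⟩
  rcases le_or_gt i a with hia | hai
  · simp only [q, hia, haj.not_ge, if_true, if_false]
    exact ⟨hne _ (by omega) _ (by omega),
      (hadj _ (by omega) _ (by omega)).trans (by omega)⟩
  · obtain ⟨hne', hadj'⟩ := hc (i - (a + 1)) (j - (a + 1)) (by omega) (by omega)
    simp only [q, hai.not_ge, haj.not_ge, if_false]
    exact ⟨hne', hadj'.trans (by omega)⟩

lemma IsInducedPathSeq.exists_isInducedCycle_of_first_contact {p c : ℕ → V} {k l : ℕ}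
    (hp : IsInducedPathSeq G p (k + 1)) (hc : IsInducedPathSeq G c (l + 1))
    (hp₀ : ∀ j ≤ l, p 0 ≠ c j ∧ (G.Adj (p 0) (c j) ↔ j = 0))
    (hc₀ : ∀ i, 0 < i → i ≤ k → p i ≠ c 0)
    (hnadj : ∀ j < l, ∀ i, 0 < i → i ≤ k → ¬G.Adj (p i) (c j))
    (hadj : ∃ i, 0 < i ∧ i ≤ k ∧ G.Adj (p i) (c l)) :
    ∃ a, 0 < a ∧ a ≤ k ∧ G.Adj (p a) (c l) ∧
      ∃ q : Fin (a + l + 2) → V, IsInducedCycle G q := by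
  classical
  obtain ⟨a, ⟨ha, hak, haadj⟩, hmin⟩ :
      ∃ a, (0 < a ∧ a ≤ k ∧ G.Adj (p a) (c l)) ∧
        ∀ i < a, ¬(0 < i ∧ i ≤ k ∧ G.Adj (p i) (c l)) :=
    ⟨Nat.find hadj, Nat.find_spec hadj, fun _ ↦ Nat.find_min hadj⟩
  refine ⟨a, ha, hak, haadj, (hp.mono (by omega)).exists_isInducedCycle_of_glue hc ?_ ?_⟩
  · rintro (_ | i) hi j hj
    · exact (hp₀ j hj).1
    rcases j with _ | j
    · exact hc₀ (i + 1) i.succ_pos (by omega)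
    · intro heq
      exact hnadj j (by omega) (i + 1) i.succ_pos (by omega)
        (heq ▸ (hc.adj_succ (by omega)).symm)
  · rintro (_ | i) hi j hj
    · rw [(hp₀ j hj).2]
      omega
    rcases hj.lt_or_eq with hjl | rfl
    · exact iff_of_false (hnadj j hjl (i + 1) i.succ_pos (by omega)) (by omega)
    rcases hi.lt_or_eq with hia | rfl
    · exact iff_of_false (fun h ↦ hmin _ hia ⟨i.succ_pos, by omega, h⟩) (by omega)
    · exact iff_of_true haadj (.inr ⟨rfl, rfl⟩)

-- The cycle follows `p` from `p i` back to `p 0` and closes up along a shortest path in `D` from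
-- `x` to a neighbour of `p 1, …, p k`.
lemma IsInducedPathSeq.exists_isInducedCycle_of_connected {p : ℕ → V} {k : ℕ}
    (hp : IsInducedPathSeq G p (k + 1)) {D : Set V} (hD : (G.induce D).Connected) {x : V}
    (hxD : x ∈ D) (hp₀D : p 0 ∉ D) (hp₀ : ∀ u ∈ D, G.Adj (p 0) u ↔ u = x)
    (hx : ∀ i, 0 < i → i ≤ k → x ∉ closedNbhd G {p i})
    (hadj : ∃ u ∈ D, ∃ i, 0 < i ∧ i ≤ k ∧ G.Adj (p i) u) :
    ∃ i, 0 < i ∧ i ≤ k ∧ (∃ u ∈ D, G.Adj (p i) u) ∧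
      ∃ m ≥ i + 3, ∃ q : Fin m → V, IsInducedCycle G q := by
  obtain ⟨l, c, hc, hcD, rfl, hcl, hcT⟩ := exists_isInducedPathSeq_to_set
    (T := {u | ∃ i, 0 < i ∧ i ≤ k ∧ G.Adj (p i) u}) hD hxD hadj
  have hx' {i : ℕ} (hi : 0 < i) (hik : i ≤ k) := notMem_closedNbhd_singleton.1 (hx i hi hik)
  have hl : l ≠ 0 := by
    rintro rfl
    obtain ⟨i, hi, hik, hadj⟩ := hcl
    exact (hx' hi hik).2 hadj
  have hp₀c (j : ℕ) (hj : j ≤ l) : p 0 ≠ c j ∧ (G.Adj (p 0) (c j) ↔ j = 0) :=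
    ⟨ne_of_mem_of_not_mem (hcD j) hp₀D |>.symm,
      (hp₀ _ (hcD j)).trans (hc.eq_iff (by omega) (by omega))⟩
  obtain ⟨a, ha, hak, hadj, q, hq⟩ := hp.exists_isInducedCycle_of_first_contact hc hp₀c
    (fun i hi hik ↦ (hx' hi hik).1) (fun j hj i hi hik h ↦ hcT j hj ⟨i, hi, hik, h⟩) hcl
  exact ⟨a, ha, hak, ⟨c l, hcD l, hadj⟩, a + l + 2, by omega, q, hq⟩

lemma IsInducedPathSeq.not_adj_of_cgeFree {p : ℕ → V} {k n : ℕ}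
    (hp : IsInducedPathSeq G p (k + 1)) (hn : 0 < n) (hfree : CgeFree G (n + 3)) {C : Set V}
    (hconn : (G.induce C).Connected) (hC : ∀ i < n, i ≤ k → ∀ u ∈ C, u ∉ closedNbhd G {p i})
    {x c : V} (hpx : G.Adj (p 0) x) (hx : ∀ i, 0 < i → i ≤ k → x ∉ closedNbhd G {p i})
    (hc : c ∈ C) (hxc : G.Adj x c) {i : ℕ} (hik : i ≤ k) {u : V} (hu : u ∈ C) :
    ¬G.Adj (p i) u := by
  have hC' {i : ℕ} (hi : i < n) (hik : i ≤ k) {u : V} (hu : u ∈ C) :=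
    notMem_closedNbhd_singleton.1 (hC i hi hik u hu)
  rcases lt_or_ge i n with hin | hni
  · exact (hC' hin hik hu).2
  intro hadj
  have hD : (G.induce ({x} ∪ C)).Connected := SimpleGraph.connected_induce_union
    SimpleGraph.Preconnected.of_subsingleton hconn.preconnected rfl hc hxc
  have hp₀D : p 0 ∉ {x} ∪ C := by
    rintro (heq | hmem)
    · exact hpx.ne heq
    · exact (hC' hn k.zero_le hmem).1 rfl
  have hp₀ : ∀ v ∈ {x} ∪ C, G.Adj (p 0) v ↔ v = x := by
    rintro v (rfl | hv)
    · exact iff_of_true hpx rfl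
    · have hnadj := (hC' hn k.zero_le hv).2
      exact iff_of_false hnadj fun heq ↦ hnadj (heq ▸ hpx)
  obtain ⟨j, hj, hjk, ⟨v, hvD, hjv⟩, m, hm, q, hq⟩ :=
    hp.exists_isInducedCycle_of_connected hD (.inl rfl) hp₀D hp₀ hx
      ⟨u, .inr hu, i, by omega, hik, hadj⟩
  have hvC : v ∈ C := hvD.resolve_left fun hvx ↦
    (notMem_closedNbhd_singleton.1 (hx j hj hjk)).2 (hvx ▸ hjv)
  have hnj : n ≤ j := not_lt.1 fun hjn ↦ (hC' hjn hjk hvC).2 hjv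
  exact hfree m (by omega) q hq

namespace IsCompOfDel

variable {X C : Set V}

lemma disjoint (hC : IsCompOfDel G X C) : Disjoint C X := by
  obtain ⟨v, rfl⟩ := hC
  rw [Set.disjoint_left]
  rintro _ ⟨u, -, rfl⟩
  exact u.2

lemma mem_of_adj_s4 (hC : IsCompOfDel G X C) {u v : V} (hu : u ∈ C) (hadj : G.Adj u v)
    (hv : v ∉ X) : v ∈ C := by
  obtain ⟨r, rfl⟩ := hC
  obtain ⟨u, hur, rfl⟩ := hu
  have hvu : (G.induce Xᶜ).Adj ⟨v, hv⟩ u := hadj.symm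
  exact ⟨⟨v, hv⟩, hvu.reachable.trans hur, rfl⟩

lemma connected (hC : IsCompOfDel G X C) : (G.induce C).Connected := by
  obtain ⟨r, rfl⟩ := hC
  have hsupp : {u | (G.induce Xᶜ).Reachable u r} =
      ((G.induce Xᶜ).connectedComponentMk r).supp := by
    ext u
    exact SimpleGraph.ConnectedComponent.eq.symm
  rw [hsupp]
  let toImage : ((G.induce Xᶜ).connectedComponentMk r).toSimpleGraph →g
      G.induce (Subtype.val '' ((G.induce Xᶜ).connectedComponentMk r).supp) :=
    ⟨Set.imageFactorization _ _, fun hadj ↦ hadj⟩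
  exact (SimpleGraph.ConnectedComponent.connected_toSimpleGraph _).map toImage
    Set.imageFactorization_surjective

end IsCompOfDel

/-- `X` carries more than half of the total weight. -/
def IsHeavy (w : V → ℕ) (X : Set V) : Prop :=
  wsum w Set.univ < 2 * wsum w X

lemma IsHeavy.inter_nonempty [Finite V] {w : V → ℕ} {B C : Set V} (hB : IsHeavy w B)
    (hC : IsHeavy w C) : (B ∩ C).Nonempty := by
  rw [← Set.not_disjoint_iff_nonempty_inter]
  intro hdisj
  have hunion : wsum w (B ∪ C) = wsum w B + wsum w C :=
    finsum_mem_union hdisj B.toFinite C.toFinite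
  have huniv : wsum w (B ∪ C) + wsum w (Set.univ \ (B ∪ C)) = wsum w Set.univ :=
    finsum_mem_add_sdiff (Set.subset_univ _) Set.finite_univ
  unfold IsHeavy at hB hC
  omega

/-- A stage of Gyárfás' path argument: an induced path `p 0, …, p k`, newest vertex first, and a
heavy connected set `B` reached by the closed neighbourhood of `p 0` but by no earlier one. -/
structure IsGyarfasPath_s4 (G : SimpleGraph V) (w : V → ℕ) (p : ℕ → V) (k : ℕ) (B : Set V) :
    Prop where
  isInducedPathSeq : IsInducedPathSeq G p (k + 1)
  connected : (G.induce B).Connected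
  isHeavy : IsHeavy w B
  inter_nonempty : (B ∩ closedNbhd G {p 0}).Nonempty
  notMem_closedNbhd : ∀ i, 0 < i → i ≤ k → ∀ u ∈ B, u ∉ closedNbhd G {p i}

namespace IsGyarfasPath_s4

variable {w : V → ℕ} {p : ℕ → V} {k m : ℕ} {B C : Set V}

lemma of_mem (hconn : (G.induce B).Connected) (hheavy : IsHeavy w B) {v : V} (hv : v ∈ B) :
    IsGyarfasPath_s4 G w (fun _ ↦ v) 0 B where
  isInducedPathSeq i j hij hj := by omega
  connected := hconn
  isHeavy := hheavy
  inter_nonempty := ⟨v, hv, .inl rfl⟩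
  notMem_closedNbhd i hi hi' := by omega

lemma exists_adj_adj (h : IsGyarfasPath_s4 G w p k B) (hm : 0 < m) (hmk : m ≤ k + 1)
    (hC : IsCompOfDel G (closedNbhd G (Set.range fun i : Fin m ↦ p i)) C)
    (hBC : (B ∩ C).Nonempty) :
    ∃ x ∈ B, G.Adj (p 0) x ∧ ∃ c ∈ C, G.Adj x c := by
  have hC₀ : ∀ u ∈ C, u ∉ closedNbhd G {p 0} := fun u hu hu₀ ↦
    hC.disjoint.notMem_of_mem_left hu (mem_closedNbhd_range.2 ⟨⟨0, hm⟩, hu₀⟩)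
  obtain ⟨b, hbB, hb⟩ := h.inter_nonempty
  obtain ⟨c, ⟨-, hcC⟩, x, ⟨hxB, hxC⟩, hadj⟩ := exists_adj_of_preconnected_induce
    h.connected.preconnected hBC ⟨b, hbB, fun hbC ↦ hC₀ b hbC hb⟩
  have hx : x ∈ closedNbhd G (Set.range fun i : Fin m ↦ p i) :=
    not_imp_comm.1 (hC.mem_of_adj_s4 hcC hadj) hxC
  obtain ⟨i, hxi⟩ := mem_closedNbhd_range.1 hx
  have hi : (i : ℕ) = 0 := by
    by_contra hi
    exact h.notMem_closedNbhd i (Nat.pos_of_ne_zero hi) (by omega) x hxB hxi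
  rw [hi] at hxi
  have hx₀ : x ≠ p 0 := by
    rintro rfl
    exact (notMem_closedNbhd_singleton.1 (hC₀ c hcC)).2 hadj.symm
  exact ⟨x, hxB, (mem_closedNbhd_singleton.1 hxi).resolve_left hx₀, c, hcC, hadj.symm⟩

lemma exists_succ [Finite V] (h : IsGyarfasPath_s4 G w p k B) {n : ℕ} (hn : 0 < n)
    (hfree : CgeFree G (n + 3))
    (hC : IsCompOfDel G (closedNbhd G (Set.range fun i : Fin (min n (k + 1)) ↦ p i)) C)
    (hheavy : IsHeavy w C) : ∃ x, IsGyarfasPath_s4 G w (seqCons x p) (k + 1) C := by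
  obtain ⟨x, hxB, hpx, c, hc, hxc⟩ := h.exists_adj_adj (by omega) (min_le_right _ _) hC
    (h.isHeavy.inter_nonempty hheavy)
  have hx (i : ℕ) (hi : 0 < i) (hik : i ≤ k) : x ∉ closedNbhd G {p i} :=
    h.notMem_closedNbhd i hi hik x hxB
  have hCn (i : ℕ) (hi : i < n) (hik : i ≤ k) (u : V) (hu : u ∈ C) : u ∉ closedNbhd G {p i} :=
    fun hui ↦ hC.disjoint.notMem_of_mem_left hu
      (mem_closedNbhd_range.2 ⟨⟨i, by omega⟩, hui⟩)
  have hnadj (i : ℕ) (hi : i ≤ k) (u : V) (hu : u ∈ C) : ¬G.Adj (p i) u :=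
    h.isInducedPathSeq.not_adj_of_cgeFree hn hfree hC.connected hCn hpx hx hc hxc hi hu
  refine ⟨x, h.isInducedPathSeq.cons ?_, hC.connected, hheavy,
    ⟨c, hc, mem_closedNbhd_singleton.2 (.inr hxc)⟩, ?_⟩
  · rintro (_ | i) hi
    · exact ⟨hpx.ne, iff_of_true hpx rfl⟩
    · obtain ⟨hne, hxi⟩ := notMem_closedNbhd_singleton.1 (hx (i + 1) i.succ_pos (by omega))
      exact ⟨hne, iff_of_false hxi i.succ_ne_zero⟩
  · rintro (_ | _ | i) hi hik u hu
    · omega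
    · exact hCn 0 hn k.zero_le u hu
    · refine notMem_closedNbhd_singleton.2 ⟨?_, hnadj (i + 1) (by omega) u hu⟩
      rintro rfl
      exact hnadj i (by omega) _ hu (h.isInducedPathSeq.adj_succ (by omega))

lemma exists_of_forall_exists_isHeavy [Finite V] [Nonempty V] {n : ℕ} (hn : 0 < n)
    (hfree : CgeFree G (n + 3))
    (hheavy : ∀ m, 0 < m → m ≤ n → ∀ p : Fin m → V, InducedPathFun G p →
      ∃ C, IsCompOfDel G (closedNbhd G (Set.range p)) C ∧ IsHeavy w C) (k : ℕ) :
    ∃ p B, IsGyarfasPath_s4 G w p k B := by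
  induction k with
  | zero =>
    obtain ⟨v⟩ := ‹Nonempty V›
    have hpath : IsInducedPathSeq G (fun _ ↦ v) 1 := fun i j hij hj ↦ by omega
    obtain ⟨B, hB, hBw⟩ := hheavy 1 one_pos hn _ hpath.inducedPathFun
    obtain ⟨⟨b, hb⟩⟩ := hB.connected.nonempty
    exact ⟨_, B, of_mem hB.connected hBw hb⟩
  | succ k ih =>
    obtain ⟨p, B, h⟩ := ih
    obtain ⟨C, hC, hCw⟩ := hheavy (min n (k + 1)) (by omega) (min_le_left _ _) _
      (h.isInducedPathSeq.mono (min_le_right _ _)).inducedPathFun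
    obtain ⟨x, hx⟩ := h.exists_succ hn hfree hC hCw
    exact ⟨_, C, hx⟩

end IsGyarfasPath_s4

end Separator

theorem stmt4_general {V : Type} [Finite V] [Nonempty V] (t : ℕ) (ht : 4 ≤ t)
    (G : SimpleGraph V) (hfree : CgeFree G t) (w : V → ℕ) :
    ∃ m : ℕ, 0 < m ∧ m + 3 ≤ t ∧ ∃ p : Fin m → V, InducedPathFun G p ∧
      ∀ C : Set V, IsCompOfDel G (closedNbhd G (Set.range p)) C →
        2 * wsum w C ≤ wsum w Set.univ := by
  by_contra! hno
  obtain ⟨n, rfl⟩ := Nat.exists_eq_add_of_le' (show 3 ≤ t by omega)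
  obtain ⟨p, B, h⟩ := IsGyarfasPath_s4.exists_of_forall_exists_isHeavy (by omega) hfree
    (fun m hm hmn ↦ hno m hm (by omega)) (Nat.card V)
  exact h.isInducedPathSeq.le_card.not_gt (Nat.lt_succ_self _)

/-- in a connected `C_{≥t}`-free graph `G` (for `t ≥ 4`) with weight
function `w`, there is an induced path `Q` on fewer than `t` vertices such that every
connected component of `G - N[V(Q)]` has weight at most `(3/4)·w(G)`. -/
theorem stmt4 {V : Type} [Fintype V] (t : ℕ) (ht : 4 ≤ t) (G : SimpleGraph V)
    (hconn : G.Connected) (hfree : CgeFree G t) (w : V → ℕ) :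
    ∃ m : ℕ, 0 < m ∧ m < t ∧ ∃ p : Fin m → V, InducedPathFun G p ∧
      ∀ C : Set V, IsCompOfDel G (closedNbhd G (Set.range p)) C →
        (wsum w C : ℝ) ≤ (3 / 4) * (wsum w Set.univ : ℝ) := by
  have := hconn.nonempty
  obtain ⟨m, hm, hmt, p, hp, hC⟩ := stmt4_general t ht G hfree w
  refine ⟨m, hm, by omega, p, hp, fun C hcomp ↦ ?_⟩
  have hhalf : 2 * (wsum w C : ℝ) ≤ wsum w Set.univ := mod_cast hC C hcomp
  linarith [(Nat.cast_nonneg (wsum w Set.univ) : (0 : ℝ) ≤ _)]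

end Paper
end
end
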